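/- Let A, B be symmetric n×n real matrices and let {u^{(ij)}}, {v^{(kl)}} ⊂ ℝⁿ satisfy: (1) u^{(ij)}_k + u^{(ij)}_l + v^{(kl)}_i + v^{(kl)}_j ≤ A_{ij}B_{kl} whenever (i ≠ j and k ≠ l) or (i = j and k = l); and (2) u^{(ij)}_i + u^{(ij)}_j + v^{(ij)}_i + v^{(ij)}_j = A_{ij}B_{ij} for all i,j. Suppose in addition there exist p, q ∈ ℝⁿ and an entrywise nonnegative matrix W ∈ ℝ^{n×n} with zero diagonal such that −Σ_{i,j} [ u^{(ij)}(e_i + e_j)ᵀ + (e_i + e_j)v^{(ij)ᵀ} ] = −W + 𝟏pᵀ + q𝟏ᵀ. Then the SDP relaxation is exact: (I, vec(I)vec(I)ᵀ) is feasible, every feasible pair (X, 𝐗) satisfies ⟨A⊗B, 𝐗⟩ ≥ Σ_{i,j} A_{ij}B_{ij}, and this value equals the QAP value. -/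

import Mathlib

open Matrix BigOperators

noncomputable section

/-- `vec(X)` indexed by pairs `(i,k)` with `vec(X)_(i,k) = X i k`. -/
def vecM {n : ℕ} (X : Matrix (Fin n) (Fin n) ℝ) : Fin n × Fin n → ℝ :=
  fun p => X p.1 p.2

/-- Kronecker product indexed so that `(A ⊗ B) (i,k) (j,l) = A i j * B k l`. -/
def kron {n : ℕ} (A B : Matrix (Fin n) (Fin n) ℝ) :
    Matrix (Fin n × Fin n) (Fin n × Fin n) ℝ :=
  Matrix.of fun p q => A p.1 q.1 * B p.2 q.2

/-- The all-ones `n × n` matrix. -/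
def Eall (n : ℕ) : Matrix (Fin n) (Fin n) ℝ :=
  Matrix.of fun _ _ => (1 : ℝ)

/-- `X` is doubly stochastic. -/
def DS {n : ℕ} (X : Matrix (Fin n) (Fin n) ℝ) : Prop :=
  (∀ i, ∑ j, X i j = 1) ∧ (∀ j, ∑ i, X i j = 1) ∧ (∀ i j, 0 ≤ X i j)

/-- Feasibility of the pair `(X, Y)` for the SDP relaxation of the QAP. -/
def SDPFeasible {n : ℕ} (X : Matrix (Fin n) (Fin n) ℝ)
    (Y : Matrix (Fin n × Fin n) (Fin n × Fin n) ℝ) : Prop :=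
  (Y - vecMulVec (vecM X) (vecM X)).PosSemidef ∧
  (∀ k l, ∑ i, ∑ j, Y (i, k) (j, l) = 1) ∧
  (∀ k l, ∑ i, ∑ j, Y (k, i) (l, j) = 1) ∧
  (∀ k i j, i ≠ j → Y (i, k) (j, k) = 0) ∧
  (∀ k i j, i ≠ j → Y (k, i) (k, j) = 0) ∧
  (∀ p q, 0 ≤ Y p q) ∧
  DS X

/-- The SDP objective `⟨A ⊗ B, Y⟩`. -/
def sdpObj {n : ℕ} (A B : Matrix (Fin n) (Fin n) ℝ)
    (Y : Matrix (Fin n × Fin n) (Fin n × Fin n) ℝ) : ℝ :=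
  ∑ p, ∑ q, kron A B p q * Y p q

/-- The set `𝒮`: closure of matrices `Y` such that `G⊗E + E⊗H + Y` is PSD for some `G, H`. -/
def Scone (n : ℕ) : Set (Matrix (Fin n × Fin n) (Fin n × Fin n) ℝ) :=
  closure {Y | ∃ G H : Matrix (Fin n) (Fin n) ℝ,
    (kron G (Eall n) + kron (Eall n) H + Y).PosSemidef}

/-- The set `𝒯`. -/
def Tcone (n : ℕ) : Set (Matrix (Fin n × Fin n) (Fin n × Fin n) ℝ) :=
  {Y | ∀ X : Matrix (Fin n) (Fin n) ℝ, DS X →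
    ∑ p, ∑ q, vecM X p * Y p q * vecM X q ≥
      ∑ p, ∑ q, vecM (1 : Matrix (Fin n) (Fin n) ℝ) p * Y p q *
        vecM (1 : Matrix (Fin n) (Fin n) ℝ) q}

/-! A feasible `Y` satisfies `(Y - vec(X) vec(X)ᵀ) z = 0` for `z` the indicator vector of a row or a
column of `[n] × [n]`, because the constraints force the quadratic form at `z` to vanish and the
matrix is positive semidefinite. Hence all marginals of `Y` are determined by `X`, and the matrix
that the dual variables `u`, `v` place below `A ⊗ B` pairs with `Y` to `tr (G X)`, where `G = Σ
(u⁽ⁱʲ⁾ (eᵢ + eⱼ)ᵀ + (eᵢ + eⱼ) v⁽ⁱʲ⁾ᵀ)`. The hypothesis on `p`, `q`, `W` says that `-G` lies in the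
normal cone of the doubly stochastic matrices at the identity, so `tr G ≤ tr (G X)`, and `tr G` is
the value `Σ Aᵢⱼ Bᵢⱼ` attained by the identity. -/

section Certificate

variable {m k R : Type*}

/-- The part `(i,a), (j,b) ↦ u⁽ⁱʲ⁾ₐ + u⁽ⁱʲ⁾_b` of the dual lower bound on `A ⊗ B`; the part coming
from the variables `v` is `dualMatrix v` with the two members of each index pair swapped. -/
def dualMatrix [Add R] (u : m → m → k → R) : Matrix (m × k) (m × k) R :=
  of fun r s => u r.1 s.1 r.2 + u r.1 s.1 s.2

variable [Fintype m] [DecidableEq m]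

/-- The matrix `Σ u⁽ⁱʲ⁾ (eᵢ + eⱼ)ᵀ`, the coefficient matrix of the pairing of `dualMatrix u` with
`Y` as a linear function of `X`, for feasible pairs `(X, Y)`. -/
def dualGradient [NonAssocSemiring R] (u : m → m → k → R) : Matrix k m R :=
  ∑ i, ∑ j, vecMulVec (u i j) (Pi.single i 1 + Pi.single j 1)

lemma dualGradient_apply [NonAssocSemiring R] (u : m → m → k → R) (a : k) (i : m) :
    dualGradient u a i = ∑ j, (u i j a + u j i a) := by
  simp [dualGradient, Matrix.sum_apply, vecMulVec_apply, Pi.single_apply, mul_add,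
    Finset.sum_add_distrib, Finset.sum_ite_irrel]

lemma trace_dualGradient [NonAssocSemiring R] (u : m → m → m → R) :
    (dualGradient u).trace = ∑ i, ∑ j, (u i j i + u i j j) := by
  simp [dualGradient, trace_sum, trace_vecMulVec, dotProduct_add]

lemma dualGradient_add_transpose_dualGradient [CommSemiring R] (u v : m → m → m → R) :
    dualGradient u + (dualGradient v)ᵀ =
      ∑ i, ∑ j,
        (vecMulVec (u i j)
            ((fun a => if a = i then 1 else 0) + (fun a => if a = j then 1 else 0)) +
          vecMulVec
            ((fun a => if a = i then 1 else 0) + (fun a => if a = j then 1 else 0)) (v i j)) := by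
  have single_eq (i : m) : (Pi.single i 1 : m → R) = fun a => if a = i then 1 else 0 :=
    funext fun a => Pi.single_apply i 1 a
  simp only [dualGradient, transpose_sum, transpose_vecMulVec, Finset.sum_add_distrib, single_eq]

end Certificate

lemma trace_vecMulVec_mul {m k R : Type*} [Fintype m] [Fintype k] [CommSemiring R]
    (q : m → R) (p : k → R) (X : Matrix k m R) :
    (vecMulVec q p * X).trace = p ⬝ᵥ X *ᵥ q := by
  rw [vecMulVec_mul, trace_vecMulVec, dotProduct_comm, dotProduct_mulVec]

lemma trace_mul_nonneg {m k R : Type*} [Fintype m] [Fintype k] [Semiring R] [PartialOrder R]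
    [IsOrderedRing R] {W : Matrix m k R} {X : Matrix k m R} (hW : ∀ i j, 0 ≤ W i j)
    (hX : ∀ i j, 0 ≤ X i j) : 0 ≤ (W * X).trace :=
  Finset.sum_nonneg fun i _ => Finset.sum_nonneg fun j _ => mul_nonneg (hW i j) (hX j i)

lemma trace_le_trace_mul_of_neg_eq {m R : Type*} [Fintype m] [DecidableEq m] [CommRing R]
    [PartialOrder R] [IsOrderedRing R] {G W X : Matrix m m R} {p q : m → R}
    (hW : ∀ i j, 0 ≤ W i j) (hW_diag : ∀ i, W i i = 0)
    (hG : -G = -W + vecMulVec 1 p + vecMulVec q 1) (hX : X ∈ doublyStochastic R m) :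
    G.trace ≤ (G * X).trace := by
  have trace_eq {Z : Matrix m m R} (hZ : Z ∈ doublyStochastic R m) :
      (G * Z).trace = (W * Z).trace - ∑ i, p i - ∑ i, q i := by
    have h : G = W - vecMulVec 1 p - vecMulVec q 1 := by
      rw [← neg_neg G, hG]
      abel
    rw [h, sub_mul, sub_mul, trace_sub, trace_sub, trace_vecMulVec_mul, trace_vecMulVec_mul,
      mulVec_one_of_mem_doublyStochastic hZ, dotProduct_one, one_dotProduct,
      sum_mulVec_of_mem_doublyStochastic hZ]
  have trace_W : W.trace = 0 := Finset.sum_eq_zero fun i _ => hW_diag i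
  calc G.trace = 0 - ∑ i, p i - ∑ i, q i := by
        simpa only [mul_one, trace_W] using trace_eq (one_mem (doublyStochastic R m))
    _ ≤ (W * X).trace - ∑ i, p i - ∑ i, q i := by
        gcongr
        exact trace_mul_nonneg hW hX.1
    _ = (G * X).trace := (trace_eq hX).symm

open scoped ComplexOrder in
lemma mulVec_eq_smul_of_posSemidef_sub_vecMulVec {m 𝕜 : Type*} [Fintype m] [RCLike 𝕜]
    {M : Matrix m m 𝕜} {x z : m → 𝕜} (hM : (M - vecMulVec x (star x)).PosSemidef)
    (hz : star z ⬝ᵥ M *ᵥ z = star z ⬝ᵥ x * (star x ⬝ᵥ z)) :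
    M *ᵥ z = (star x ⬝ᵥ z) • x := by
  have mulVec_eq : (M - vecMulVec x (star x)) *ᵥ z = M *ᵥ z - (star x ⬝ᵥ z) • x := by
    rw [sub_mulVec, vecMulVec_mulVec, op_smul_eq_smul]
  rw [← sub_eq_zero, ← mulVec_eq, ← hM.dotProduct_mulVec_zero_iff, mulVec_eq, dotProduct_sub,
    dotProduct_smul, smul_eq_mul, hz, mul_comm, sub_self]

section Relaxation

variable {n : ℕ}

lemma ds_iff_mem_doublyStochastic {X : Matrix (Fin n) (Fin n) ℝ} :
    DS X ↔ X ∈ doublyStochastic ℝ (Fin n) := by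
  rw [mem_doublyStochastic_iff_sum, DS, ← and_assoc, and_comm]

namespace SDPFeasible

variable {X : Matrix (Fin n) (Fin n) ℝ} {Y : Matrix (Fin n × Fin n) (Fin n × Fin n) ℝ}

lemma transpose (h : SDPFeasible X Y) :
    SDPFeasible Xᵀ (Y.submatrix Prod.swap Prod.swap) := by
  obtain ⟨psd, sum_fst, sum_snd, zero_fst, zero_snd, nonneg, ds⟩ := h
  exact ⟨psd.submatrix Prod.swap, sum_snd, sum_fst, zero_snd, zero_fst,
    fun r s => nonneg r.swap s.swap, ds.2.1, ds.1, fun i j => ds.2.2 j i⟩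

lemma mem_doublyStochastic (h : SDPFeasible X Y) : X ∈ doublyStochastic ℝ (Fin n) := by
  obtain ⟨-, -, -, -, -, -, ds⟩ := h
  exact ds_iff_mem_doublyStochastic.1 ds

lemma isSymm (h : SDPFeasible X Y) : Y.IsSymm := by
  have hM : (Y - vecMulVec (vecM X) (vecM X)).IsSymm := h.1.1
  simpa only [sub_add_cancel] using hM.add (transpose_vecMulVec (vecM X) (vecM X))

lemma sum_row (h : SDPFeasible X Y) (i k j : Fin n) : ∑ l, Y (i, k) (j, l) = X i k := by
  obtain ⟨psd, -, sum_snd, -, -, -, row_sum, -, -⟩ := h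
  let z : Fin n × Fin n → ℝ := fun s => if s.1 = j then 1 else 0
  have dot_z : vecM X ⬝ᵥ z = 1 := by
    simpa [z, dotProduct, Fintype.sum_prod_type_right, vecM] using row_sum j
  have quad_z : z ⬝ᵥ Y *ᵥ z = 1 := by
    simpa [z, dotProduct, mulVec, Fintype.sum_prod_type_right] using sum_snd j j
  have mulVec_z : Y *ᵥ z = vecM X := by
    simpa [dot_z] using mulVec_eq_smul_of_posSemidef_sub_vecMulVec (x := vecM X) (z := z)
      psd (by simp [quad_z, dotProduct_comm z (vecM X), dot_z])
  simpa [z, mulVec, dotProduct, Fintype.sum_prod_type_right, vecM] using congrFun mulVec_z (i, k)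

lemma sum_dualMatrix_mul (h : SDPFeasible X Y) (u : Fin n → Fin n → Fin n → ℝ) :
    ∑ r, ∑ s, dualMatrix u r s * Y r s = (dualGradient u * X).trace := by
  have sum_mul (w : Fin n → Fin n → Fin n → ℝ) :
      ∑ r, ∑ s, w r.1 s.1 r.2 * Y r s = ∑ i, ∑ k, (∑ j, w i j k) * X i k := by
    simp only [Fintype.sum_prod_type, ← Finset.mul_sum, h.sum_row, ← Finset.sum_mul]
  have sum_mul_swap : ∑ r, ∑ s, u r.1 s.1 s.2 * Y r s = ∑ i, ∑ k, (∑ j, u j i k) * X i k := by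
    rw [Finset.sum_comm, ← sum_mul fun i j k => u j i k]
    simp only [h.isSymm.apply]
  calc ∑ r, ∑ s, dualMatrix u r s * Y r s
      = ∑ r, ∑ s, u r.1 s.1 r.2 * Y r s + ∑ r, ∑ s, u r.1 s.1 s.2 * Y r s := by
        simp only [dualMatrix, of_apply, add_mul, Finset.sum_add_distrib]
    _ = ∑ i, ∑ k, dualGradient u k i * X i k := by
        simp only [sum_mul, sum_mul_swap, dualGradient_apply, add_mul, Finset.sum_add_distrib]
    _ = (dualGradient u * X).trace := Finset.sum_comm

lemma sum_dualMatrix_submatrix_swap_mul (h : SDPFeasible X Y) (v : Fin n → Fin n → Fin n → ℝ) :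
    ∑ r, ∑ s, (dualMatrix v).submatrix Prod.swap Prod.swap r s * Y r s =
      ((dualGradient v)ᵀ * X).trace := by
  calc ∑ r, ∑ s, (dualMatrix v).submatrix Prod.swap Prod.swap r s * Y r s
      = ∑ r, ∑ s, dualMatrix v r s * Y.submatrix Prod.swap Prod.swap r s := by
        rw [← (Equiv.prodComm _ _).sum_comp]
        refine Finset.sum_congr rfl fun r _ => ?_
        rw [← (Equiv.prodComm _ _).sum_comp]
        rfl
    _ = (dualGradient v * Xᵀ).trace := h.transpose.sum_dualMatrix_mul v
    _ = ((dualGradient v)ᵀ * X).trace := (trace_transpose_mul _ _).symm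

lemma sum_mul_le_sdpObj (h : SDPFeasible X Y) {A B : Matrix (Fin n) (Fin n) ℝ}
    {M : Matrix (Fin n × Fin n) (Fin n × Fin n) ℝ}
    (hM : ∀ i j k l, ((i ≠ j ∧ k ≠ l) ∨ (i = j ∧ k = l)) → M (i, k) (j, l) ≤ A i j * B k l) :
    ∑ r, ∑ s, M r s * Y r s ≤ sdpObj A B Y := by
  obtain ⟨-, -, -, zero_fst, zero_snd, nonneg, -⟩ := h
  refine Finset.sum_le_sum fun ⟨i, k⟩ _ => Finset.sum_le_sum fun ⟨j, l⟩ _ => ?_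
  by_cases hij : i = j <;> by_cases hkl : k = l
  · exact mul_le_mul_of_nonneg_right (hM i j k l (.inr ⟨hij, hkl⟩)) (nonneg _ _)
  · subst hij
    simp [zero_snd i k l hkl]
  · subst hkl
    simp [zero_fst k i j hij]
  · exact mul_le_mul_of_nonneg_right (hM i j k l (.inl ⟨hij, hkl⟩)) (nonneg _ _)

lemma trace_mul_le_sdpObj (h : SDPFeasible X Y) {A B : Matrix (Fin n) (Fin n) ℝ}
    {u v : Fin n → Fin n → Fin n → ℝ}
    (huv : ∀ i j k l, ((i ≠ j ∧ k ≠ l) ∨ (i = j ∧ k = l)) →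
      u i j k + u i j l + v k l i + v k l j ≤ A i j * B k l) :
    ((dualGradient u + (dualGradient v)ᵀ) * X).trace ≤ sdpObj A B Y := by
  rw [add_mul, trace_add, ← h.sum_dualMatrix_mul, ← h.sum_dualMatrix_submatrix_swap_mul]
  simp only [← Finset.sum_add_distrib, ← add_mul, ← Matrix.add_apply]
  exact h.sum_mul_le_sdpObj fun i j k l hijkl => by
    simpa [dualMatrix, ← add_assoc] using huv i j k l hijkl

end SDPFeasible

lemma sdpFeasible_vecMulVec_permMatrix (σ : Equiv.Perm (Fin n)) :
    SDPFeasible (σ.permMatrix ℝ)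
      (vecMulVec (vecM (σ.permMatrix ℝ)) (vecM (σ.permMatrix ℝ))) := by
  have ds : DS (σ.permMatrix ℝ) := ds_iff_mem_doublyStochastic.2 permMatrix_mem_doublyStochastic
  refine ⟨by rw [sub_self]; exact .zero, fun k l => ?_, fun k l => ?_, fun k i j hij => ?_,
    fun k i j hij => ?_, fun r s => mul_nonneg (ds.2.2 _ _) (ds.2.2 _ _), ds⟩
  · simp only [vecMulVec_apply, vecM, ← Finset.mul_sum, ds.2.1, mul_one]
  · simp only [vecMulVec_apply, vecM, ← Finset.mul_sum, ds.1, mul_one]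
  · by_cases hi : σ i = k
    · have hj : σ j ≠ k := fun hj => hij (σ.injective (hi.trans hj.symm))
      simp [vecMulVec_apply, vecM, Equiv.toPEquiv_apply, hj]
    · simp [vecMulVec_apply, vecM, Equiv.toPEquiv_apply, hi]
  · by_cases hi : σ k = i
    · simp [vecMulVec_apply, vecM, Equiv.toPEquiv_apply, hi, hij]
    · simp [vecMulVec_apply, vecM, Equiv.toPEquiv_apply, hi]

lemma sdpObj_vecMulVec_vecM (A B X : Matrix (Fin n) (Fin n) ℝ) :
    sdpObj A B (vecMulVec (vecM X) (vecM X)) = ∑ i, ∑ j, A i j * (X * B * Xᵀ) i j := by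
  simp only [sdpObj, kron, of_apply, vecMulVec_apply, vecM, Fintype.sum_prod_type, mul_apply,
    transpose_apply, Finset.mul_sum, Finset.sum_mul]
  refine Finset.sum_congr rfl fun i _ => ?_
  rw [Finset.sum_comm]
  refine Finset.sum_congr rfl fun j _ => ?_
  rw [Finset.sum_comm]
  refine Finset.sum_congr rfl fun l _ => Finset.sum_congr rfl fun k _ => ?_
  ring

lemma sdpObj_vecMulVec_permMatrix (A B : Matrix (Fin n) (Fin n) ℝ) (σ : Equiv.Perm (Fin n)) :
    sdpObj A B (vecMulVec (vecM (σ.permMatrix ℝ)) (vecM (σ.permMatrix ℝ))) =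
      ∑ i, ∑ j, A i j * B (σ i) (σ j) := by
  rw [sdpObj_vecMulVec_vecM, transpose_permMatrix, PEquiv.toMatrix_toPEquiv_mul,
    PEquiv.mul_toMatrix_toPEquiv]
  rfl

end Relaxation

theorem stmt14_general {n : ℕ} (A B : Matrix (Fin n) (Fin n) ℝ)
    (u v : Fin n → Fin n → (Fin n → ℝ))
    (h1 : ∀ i j k l, ((i ≠ j ∧ k ≠ l) ∨ (i = j ∧ k = l)) →
      u i j k + u i j l + v k l i + v k l j ≤ A i j * B k l)
    (h2 : ∀ i j, u i j i + u i j j + v i j i + v i j j = A i j * B i j)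
    (p q : Fin n → ℝ) (W : Matrix (Fin n) (Fin n) ℝ)
    (hW0 : ∀ i j, 0 ≤ W i j) (hWdiag : ∀ i, W i i = 0)
    (heq : -(∑ i, ∑ j,
        (vecMulVec (u i j)
            ((fun a => if a = i then (1 : ℝ) else 0) +
              (fun a => if a = j then (1 : ℝ) else 0)) +
          vecMulVec
            ((fun a => if a = i then (1 : ℝ) else 0) +
              (fun a => if a = j then (1 : ℝ) else 0)) (v i j))) =
      -W + vecMulVec (fun _ => (1 : ℝ)) p + vecMulVec q (fun _ => (1 : ℝ))) :
    SDPFeasible (1 : Matrix (Fin n) (Fin n) ℝ)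
      (vecMulVec (vecM (1 : Matrix (Fin n) (Fin n) ℝ))
        (vecM (1 : Matrix (Fin n) (Fin n) ℝ))) ∧
    (∀ (X : Matrix (Fin n) (Fin n) ℝ)
        (Y : Matrix (Fin n × Fin n) (Fin n × Fin n) ℝ),
      SDPFeasible X Y → sdpObj A B Y ≥ ∑ i, ∑ j, A i j * B i j) ∧
    sdpObj A B (vecMulVec (vecM (1 : Matrix (Fin n) (Fin n) ℝ))
        (vecM (1 : Matrix (Fin n) (Fin n) ℝ))) = ∑ i, ∑ j, A i j * B i j ∧
    (∀ σ : Equiv.Perm (Fin n),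
      ∑ i, ∑ j, A i j * B (σ i) (σ j) ≥ ∑ i, ∑ j, A i j * B i j) := by
  rw [← dualGradient_add_transpose_dualGradient] at heq
  have trace_eq : (dualGradient u + (dualGradient v)ᵀ).trace = ∑ i, ∑ j, A i j * B i j := by
    simp only [trace_add, trace_transpose, trace_dualGradient, ← Finset.sum_add_distrib,
      ← add_assoc, h2]
  have lower_bound (X : Matrix (Fin n) (Fin n) ℝ)
      (Y : Matrix (Fin n × Fin n) (Fin n × Fin n) ℝ) (h : SDPFeasible X Y) :
      sdpObj A B Y ≥ ∑ i, ∑ j, A i j * B i j := by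
    calc ∑ i, ∑ j, A i j * B i j = (dualGradient u + (dualGradient v)ᵀ).trace := trace_eq.symm
      _ ≤ ((dualGradient u + (dualGradient v)ᵀ) * X).trace :=
        trace_le_trace_mul_of_neg_eq hW0 hWdiag heq h.mem_doublyStochastic
      _ ≤ sdpObj A B Y := h.trace_mul_le_sdpObj h1
  refine ⟨?_, lower_bound, ?_, fun σ => ?_⟩
  · simpa only [permMatrix_one] using sdpFeasible_vecMulVec_permMatrix (1 : Equiv.Perm (Fin n))
  · simpa only [permMatrix_one, Equiv.Perm.one_apply] using sdpObj_vecMulVec_permMatrix A B 1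
  · rw [← sdpObj_vecMulVec_permMatrix]
    exact lower_bound _ _ (sdpFeasible_vecMulVec_permMatrix σ)

/-- Proposition 6 (certificate via the normal cone condition): under Requirements 1–2 of
the master theorem together with the normal-cone representation of the gradient term,
the SDP relaxation is exact. -/
theorem stmt14 {n : ℕ} (A B : Matrix (Fin n) (Fin n) ℝ)
    (hA : A.IsSymm) (hB : B.IsSymm)
    (u v : Fin n → Fin n → (Fin n → ℝ))
    (h1 : ∀ i j k l, ((i ≠ j ∧ k ≠ l) ∨ (i = j ∧ k = l)) →
      u i j k + u i j l + v k l i + v k l j ≤ A i j * B k l)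
    (h2 : ∀ i j, u i j i + u i j j + v i j i + v i j j = A i j * B i j)
    (p q : Fin n → ℝ) (W : Matrix (Fin n) (Fin n) ℝ)
    (hW0 : ∀ i j, 0 ≤ W i j) (hWdiag : ∀ i, W i i = 0)
    (heq : -(∑ i, ∑ j,
        (vecMulVec (u i j)
            ((fun a => if a = i then (1 : ℝ) else 0) +
              (fun a => if a = j then (1 : ℝ) else 0)) +
          vecMulVec
            ((fun a => if a = i then (1 : ℝ) else 0) +
              (fun a => if a = j then (1 : ℝ) else 0)) (v i j))) =
      -W + vecMulVec (fun _ => (1 : ℝ)) p + vecMulVec q (fun _ => (1 : ℝ))) :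
    SDPFeasible (1 : Matrix (Fin n) (Fin n) ℝ)
      (vecMulVec (vecM (1 : Matrix (Fin n) (Fin n) ℝ))
        (vecM (1 : Matrix (Fin n) (Fin n) ℝ))) ∧
    (∀ (X : Matrix (Fin n) (Fin n) ℝ)
        (Y : Matrix (Fin n × Fin n) (Fin n × Fin n) ℝ),
      SDPFeasible X Y → sdpObj A B Y ≥ ∑ i, ∑ j, A i j * B i j) ∧
    sdpObj A B (vecMulVec (vecM (1 : Matrix (Fin n) (Fin n) ℝ))
        (vecM (1 : Matrix (Fin n) (Fin n) ℝ))) = ∑ i, ∑ j, A i j * B i j ∧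
    (∀ σ : Equiv.Perm (Fin n),
      ∑ i, ∑ j, A i j * B (σ i) (σ j) ≥ ∑ i, ∑ j, A i j * B i j) :=
  stmt14_general A B u v h1 h2 p q W hW0 hWdiag heq
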